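/- arXiv:2411.18131 — 4 statements merged into one kernel-verified Lean document; each statement's English description precedes it below -/
import Mathlib

section
/- Let B_n be the number of king permutations of length n that do not begin with the value 1 (with B_0 = 1, B_1 = 0), and let B(t) = Σ_{n≥0} B_n t^n. Then (1+t)·B(t) = A(t) as formal power series over ℚ; equivalently, B_n + B_{n−1} = A_n for every n ≥ 1. -/
/-- A permutation of `{0, …, n-1}` is a *king permutation* if consecutive entries
differ by more than 1 in absolute value. -/
def IsKing {n : ℕ} (σ : Equiv.Perm (Fin n)) : Prop :=
  ∀ i : Fin n, ∀ h : (i : ℕ) + 1 < n,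
    1 < |((σ ⟨(i : ℕ) + 1, h⟩ : ℕ) : ℤ) - ((σ i : ℕ) : ℤ)|

/-- `kingCount n = A_n`, the number of king permutations of length `n`. -/
noncomputable def kingCount (n : ℕ) : ℕ :=
  Nat.card {σ : Equiv.Perm (Fin n) // IsKing σ}

/-- `A(t) = Σ_{n≥0} A_n t^n` as a formal power series over `ℚ`. -/
noncomputable def kingA : PowerSeries ℚ :=
  PowerSeries.mk fun n => (kingCount n : ℚ)

/-- `Bcount n = B_n`, the number of king permutations of length `n` that do not
begin with the smallest value. -/
noncomputable def Bcount (n : ℕ) : ℕ :=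
  Nat.card {σ : Equiv.Perm (Fin n) // IsKing σ ∧ ∀ h : 0 < n, σ ⟨0, h⟩ ≠ ⟨0, h⟩}

/-- `B(t) = Σ_{n≥0} B_n t^n` as a formal power series over `ℚ`. -/
noncomputable def kingB : PowerSeries ℚ :=
  PowerSeries.mk fun n => (Bcount n : ℚ)

lemma king_key {n : ℕ} (e : Equiv.Perm (Fin n)) :
    IsKing (Equiv.Perm.decomposeFin.symm (0, e)) ↔
      (IsKing e ∧ ∀ h : 0 < n, e ⟨0, h⟩ ≠ ⟨0, h⟩) := by
  have hs : ∀ (k : ℕ) (hk : k < n) (hk' : k + 1 < n + 1),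
      ((Equiv.Perm.decomposeFin.symm ((0 : Fin (n+1)), e) ⟨k + 1, hk'⟩ : Fin (n+1)) : ℕ)
        = (e ⟨k, hk⟩ : ℕ) + 1 := by
    intro k hk hk'
    have := Equiv.Perm.decomposeFin_symm_apply_succ e 0 ⟨k, hk⟩
    simp only [Equiv.swap_self, Equiv.refl_apply] at this
    have h2 : (⟨k + 1, hk'⟩ : Fin (n+1)) = Fin.succ ⟨k, hk⟩ := rfl
    rw [h2, this, Fin.val_succ]
  have h0 : ((Equiv.Perm.decomposeFin.symm ((0 : Fin (n+1)), e) ⟨0, Nat.succ_pos n⟩ : Fin (n+1)) : ℕ) = 0 := by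
    have := Equiv.Perm.decomposeFin_symm_apply_zero 0 e
    have h2 : (⟨0, Nat.succ_pos n⟩ : Fin (n+1)) = 0 := rfl
    rw [h2, this, Fin.val_zero]
  constructor
  · intro H
    constructor
    · rintro ⟨i, hi⟩ h
      have := H ⟨i + 1, by omega⟩ (by simpa using h)
      simp only at this h
      rw [hs _ h, hs _ hi] at this
      push_cast at this
      rwa [add_sub_add_right_eq_sub] at this
    · intro h heq
      have := H ⟨0, by omega⟩ (by simpa using h)
      simp only at this
      rw [hs 0 h, h0, heq] at this
      simp at this
  · rintro ⟨H, Hne⟩ ⟨i, hi⟩ h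
    simp only at h ⊢
    cases i with
    | zero =>
      have hn : 0 < n := by omega
      rw [hs 0 hn, h0]
      have h3 := Hne hn
      have h4 : (e ⟨0, hn⟩ : ℕ) ≠ 0 := fun h5 => h3 (Fin.ext h5)
      rw [lt_abs]; left; omega
    | succ j =>
      have := H ⟨j, by omega⟩ (by simp only; omega)
      rw [hs (j+1) (by omega), hs j (by omega)]
      push_cast
      rwa [add_sub_add_right_eq_sub]

lemma king_rec (n : ℕ) : Bcount (n + 1) + Bcount n = kingCount (n + 1) := by
  classical
  have h1 : Bcount n =
      Nat.card {σ : Equiv.Perm (Fin (n+1)) // IsKing σ ∧ ¬ ∀ h : 0 < n + 1, σ ⟨0, h⟩ ≠ ⟨0, h⟩} := by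
    unfold Bcount
    refine Nat.card_eq_of_bijective
      (fun e => ⟨Equiv.Perm.decomposeFin.symm (0, e.1), (king_key e.1).2 e.2, fun h =>
        h (Nat.succ_pos n) (Equiv.Perm.decomposeFin_symm_apply_zero 0 e.1)⟩) ⟨?_, ?_⟩
    · intro a b hab
      have := Equiv.Perm.decomposeFin.symm.injective (Subtype.ext_iff.1 hab)
      exact Subtype.ext (Prod.ext_iff.1 this).2
    · rintro ⟨σ, hk, h0⟩
      push Not at h0
      obtain ⟨h, h0⟩ := h0
      obtain ⟨⟨p, e⟩, rfl⟩ := Equiv.Perm.decomposeFin.symm.surjective σ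
      have hp : p = 0 := (Equiv.Perm.decomposeFin_symm_apply_zero p e).symm.trans h0
      subst hp
      exact ⟨⟨e, (king_key e).1 hk⟩, rfl⟩
  rw [h1]
  unfold Bcount kingCount
  simp only [Nat.card_eq_fintype_card, Fintype.card_subtype]
  rw [← Finset.filter_filter, ← Finset.filter_filter]
  exact Finset.card_filter_add_card_filter_not _

lemma king_zero : Bcount 0 = kingCount 0 := by
  unfold Bcount kingCount
  simp

theorem statement_0 :
    (1 + PowerSeries.X) * kingB = kingA ∧
      ∀ n : ℕ, 1 ≤ n → Bcount n + Bcount (n - 1) = kingCount n := by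
  constructor
  · ext n
    rw [add_mul, one_mul, map_add]
    cases n with
    | zero => simp [kingA, kingB, king_zero]
    | succ n =>
      rw [PowerSeries.coeff_succ_X_mul]
      simp only [kingA, kingB, PowerSeries.coeff_mk]
      exact_mod_cast king_rec n
  · intro n hn
    obtain ⟨m, rfl⟩ : ∃ m, n = m + 1 := ⟨n - 1, by omega⟩
    simpa using king_rec m
end

section
/- For every n ≥ 2, the number of king permutations σ of length n with σ_1 < σ_n equals the number with σ_1 > σ_n, and each equals A_n/2. Consequently, exactly A_n/2 king permutations of length n avoid the mesh pattern Nr. 10 and exactly A_n/2 contain exactly one occurrence of it, where an occurrence of pattern Nr. 10 in σ is a pair of indices i < j with σ_i < σ_j such that there is no position before i and no position after j (forcing i = 1 and j = n). -/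
/-- An occurrence of the mesh pattern Nr. 10 in `σ`: positions `i < j` with
`σ i < σ j`, no position before `i`, and no position after `j`. -/
def OccTen {n : ℕ} (σ : Equiv.Perm (Fin n)) (i j : Fin n) : Prop :=
  i < j ∧ σ i < σ j ∧ (∀ k : Fin n, ¬ k < i) ∧ (∀ k : Fin n, ¬ j < k)

/-- The number of occurrences of the mesh pattern Nr. 10 in `σ`. -/
noncomputable def occTen {n : ℕ} (σ : Equiv.Perm (Fin n)) : ℕ :=
  Nat.card {p : Fin n × Fin n // OccTen σ p.1 p.2}

theorem isKing_rev {n : ℕ} (σ : Equiv.Perm (Fin n)) :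
    IsKing (σ.trans Fin.revPerm) ↔ IsKing σ := by
  unfold IsKing
  refine forall_congr' fun i => forall_congr' fun h => ?_
  have h1 := (σ ⟨(i : ℕ) + 1, h⟩).isLt
  have h2 := (σ i).isLt
  simp only [Equiv.trans_apply, Fin.revPerm_apply, Fin.val_rev]
  rw [abs_sub_comm]
  have : ((n - ((σ i : ℕ) + 1) : ℕ) : ℤ) - ((n - ((σ ⟨(i : ℕ) + 1, h⟩ : ℕ) + 1) : ℕ) : ℤ)
      = ((σ ⟨(i : ℕ) + 1, h⟩ : ℕ) : ℤ) - ((σ i : ℕ) : ℤ) := by omega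
  rw [this]

theorem occTen_of_lt {n : ℕ} (hn : 2 ≤ n) (h0 : 0 < n) (hl : n - 1 < n) (σ : Equiv.Perm (Fin n))
    (h : σ ⟨0, h0⟩ < σ ⟨n - 1, hl⟩) : occTen σ = 1 := by
  unfold occTen
  rw [Nat.card_eq_one_iff_exists]
  refine ⟨⟨(⟨0, h0⟩, ⟨n - 1, hl⟩), ?_, h, ?_, ?_⟩, ?_⟩
  · simp only [Fin.mk_lt_mk]; omega
  · intro k hk; simp only [Fin.lt_def] at hk; omega
  · intro k hk; simp only [Fin.lt_def] at hk; omega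
  · rintro ⟨⟨i, j⟩, _, _, hi, hj⟩
    have h1 := hi ⟨0, h0⟩
    have h2 := hj ⟨n - 1, hl⟩
    simp only [Fin.lt_def] at h1 h2
    apply Subtype.ext
    apply Prod.ext <;> apply Fin.ext <;> simp <;> omega

theorem occTen_of_not_lt {n : ℕ} (hn : 2 ≤ n) (h0 : 0 < n) (hl : n - 1 < n) (σ : Equiv.Perm (Fin n))
    (h : ¬ σ ⟨0, h0⟩ < σ ⟨n - 1, hl⟩) : occTen σ = 0 := by
  unfold occTen
  have : IsEmpty {p : Fin n × Fin n // OccTen σ p.1 p.2} := by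
    constructor
    rintro ⟨⟨i, j⟩, _, hs, hi, hj⟩
    have h1 := hi ⟨0, h0⟩
    have h2 := hj ⟨n - 1, hl⟩
    simp only [Fin.lt_def] at h1 h2
    have e1 : i = ⟨0, h0⟩ := by apply Fin.ext; simp; omega
    have e2 : j = ⟨n - 1, hl⟩ := by apply Fin.ext; simp; omega
    simp only [e1, e2] at hs
    exact h hs
  exact Nat.card_of_isEmpty

theorem statement_6 (n : ℕ) (hn : 2 ≤ n) :
    Nat.card {σ : Equiv.Perm (Fin n) //
        IsKing σ ∧ σ ⟨0, by omega⟩ < σ ⟨n - 1, by omega⟩}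
      = Nat.card {σ : Equiv.Perm (Fin n) //
          IsKing σ ∧ σ ⟨n - 1, by omega⟩ < σ ⟨0, by omega⟩} ∧
    2 * Nat.card {σ : Equiv.Perm (Fin n) //
        IsKing σ ∧ σ ⟨0, by omega⟩ < σ ⟨n - 1, by omega⟩} = kingCount n ∧
    2 * Nat.card {σ : Equiv.Perm (Fin n) // IsKing σ ∧ occTen σ = 0}
      = kingCount n ∧
    2 * Nat.card {σ : Equiv.Perm (Fin n) // IsKing σ ∧ occTen σ = 1}
      = kingCount n := by
  have ne : ∀ σ : Equiv.Perm (Fin n), σ ⟨0, by omega⟩ ≠ σ ⟨n - 1, by omega⟩ := by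
    intro σ he
    have := congrArg Fin.val (σ.injective he)
    simp at this
    omega
  have A : Nat.card {σ : Equiv.Perm (Fin n) //
        IsKing σ ∧ σ ⟨0, by omega⟩ < σ ⟨n - 1, by omega⟩}
      = Nat.card {σ : Equiv.Perm (Fin n) //
          IsKing σ ∧ σ ⟨n - 1, by omega⟩ < σ ⟨0, by omega⟩} := by
    let e : Equiv.Perm (Equiv.Perm (Fin n)) := Equiv.mulLeft Fin.revPerm
    refine Nat.card_congr (e.subtypeEquiv fun σ => ?_)
    have he : e σ = σ.trans Fin.revPerm := rfl
    rw [he, isKing_rev]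
    simp only [Equiv.trans_apply, Fin.revPerm_apply, Fin.rev_lt_rev]
  have B : kingCount n = Nat.card {σ : Equiv.Perm (Fin n) //
        IsKing σ ∧ σ ⟨0, by omega⟩ < σ ⟨n - 1, by omega⟩}
      + Nat.card {σ : Equiv.Perm (Fin n) //
          IsKing σ ∧ σ ⟨n - 1, by omega⟩ < σ ⟨0, by omega⟩} := by
    classical
    unfold kingCount
    simp only [Nat.card_eq_fintype_card]
    rw [← Fintype.card_subtype_or_disjoint]
    · refine Fintype.card_congr (Equiv.subtypeEquivRight fun σ => ?_)
      have := lt_or_gt_of_ne (ne σ)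
      tauto
    · rw [Pi.disjoint_iff]
      intro σ
      rw [Prop.disjoint_iff]
      rintro ⟨⟨_, h1⟩, _, h2⟩
      exact absurd h1 (not_lt_of_gt h2)
  have C : Nat.card {σ : Equiv.Perm (Fin n) // IsKing σ ∧ occTen σ = 0}
      = Nat.card {σ : Equiv.Perm (Fin n) //
          IsKing σ ∧ σ ⟨n - 1, by omega⟩ < σ ⟨0, by omega⟩} := by
    refine Nat.card_congr (Equiv.subtypeEquivRight fun σ => and_congr_right fun _ => ?_)
    rcases lt_or_gt_of_ne (ne σ) with h | h
    · simp [occTen_of_lt hn (by omega) (by omega) σ h, h.le]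
    · simp only [occTen_of_not_lt hn (by omega) (by omega) σ (not_lt_of_gt h), true_iff]; exact h
  have D : Nat.card {σ : Equiv.Perm (Fin n) // IsKing σ ∧ occTen σ = 1}
      = Nat.card {σ : Equiv.Perm (Fin n) //
          IsKing σ ∧ σ ⟨0, by omega⟩ < σ ⟨n - 1, by omega⟩} := by
    refine Nat.card_congr (Equiv.subtypeEquivRight fun σ => and_congr_right fun _ => ?_)
    rcases lt_or_gt_of_ne (ne σ) with h | h
    · simp [occTen_of_lt hn (by omega) (by omega) σ h, h]
    · simp [occTen_of_not_lt hn (by omega) (by omega) σ (not_lt_of_gt h), le_of_lt h]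
  rw [C, D]
  omega
end

section
/- Let occ(σ) be the number of occurrences in σ of the mesh pattern Nr. 12, where an occurrence is a pair of indices i < j with σ_i < σ_j such that i = 1 and no index k > i satisfies σ_k < σ_i (equivalently, σ_1 = 1 and j is any index with 1 < j ≤ n). Then for every n ≥ 1, Σ_{σ∈K_n} u^{occ(σ)} = B_n + u^{n−1}·B_{n−1} in ℚ[u]. In particular, a king permutation of length n ≥ 2 has exactly n−1 occurrences of this pattern if it begins with 1 and none otherwise, and the number beginning with 1 equals B_{n−1}. -/
/-- An occurrence of the mesh pattern Nr. 12 in `σ`: positions `i < j` with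
`σ i < σ j`, such that `i` is the first position and no later position holds a
value smaller than `σ i`. -/
def OccTwelve {n : ℕ} (σ : Equiv.Perm (Fin n)) (i j : Fin n) : Prop :=
  i < j ∧ σ i < σ j ∧ (∀ k : Fin n, ¬ k < i) ∧ (∀ k : Fin n, i < k → σ i < σ k)

/-- The number of occurrences of the mesh pattern Nr. 12 in `σ`. -/
noncomputable def occTwelve {n : ℕ} (σ : Equiv.Perm (Fin n)) : ℕ :=
  Nat.card {p : Fin n × Fin n // OccTwelve σ p.1 p.2}


lemma occ_of_fix {m : ℕ} (σ : Equiv.Perm (Fin (m+1))) (h : σ 0 = 0) : occTwelve σ = m := by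
  unfold occTwelve
  have e : {p : Fin (m+1) × Fin (m+1) // OccTwelve σ p.1 p.2} ≃ Fin m := {
    toFun := fun p => p.1.2.pred (by
      have := p.2.1
      exact Fin.ne_zero_of_lt this)
    invFun := fun j => ⟨(0, j.succ), by
      have key : ∀ k : Fin (m+1), 0 < k → σ 0 < σ k := by
        intro k hk
        rw [h]
        apply Fin.pos_of_ne_zero
        intro h2
        rw [← h] at h2
        exact hk.ne' (σ.injective h2)
      exact ⟨Fin.succ_pos j, key _ (Fin.succ_pos j), fun k => Fin.not_lt_zero k, key⟩⟩
    left_inv := by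
      rintro ⟨⟨i, j⟩, h1, h2, h3, h4⟩
      have : i = 0 := by
        by_contra hi
        exact h3 0 (Fin.pos_of_ne_zero hi)
      subst this
      simp
    right_inv := by
      intro j
      simp }
  rw [Nat.card_congr e]
  simp

lemma occ_of_nfix {m : ℕ} (σ : Equiv.Perm (Fin (m+1))) (h : σ 0 ≠ 0) : occTwelve σ = 0 := by
  unfold occTwelve
  have : IsEmpty {p : Fin (m+1) × Fin (m+1) // OccTwelve σ p.1 p.2} := by
    constructor
    rintro ⟨⟨i, j⟩, h1, h2, h3, h4⟩
    have : i = 0 := by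
      by_contra hi
      exact h3 0 (Fin.pos_of_ne_zero hi)
    subst this
    have h5 := h4 (σ.symm 0) (Fin.pos_of_ne_zero (by
      intro h6
      exact h (σ.symm_apply_eq.1 h6).symm))
    simp at h5
  simp

lemma king_ext {m : ℕ} (e : Equiv.Perm (Fin m)) :
    IsKing (Equiv.Perm.decomposeFin.symm (0, e)) ↔
      (IsKing e ∧ ∀ h : 0 < m, e ⟨0, h⟩ ≠ ⟨0, h⟩) := by
  have hs : ∀ x : Fin m, Equiv.Perm.decomposeFin.symm (0, e) x.succ = (e x).succ := by
    intro x
    simp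
  have h0 : Equiv.Perm.decomposeFin.symm (0, e) 0 = 0 := by simp
  constructor
  · intro H
    refine ⟨?_, ?_⟩
    · intro i hi
      have := H i.succ (by simpa using hi)
      have h2 : (⟨(i.succ : ℕ) + 1, by simpa using hi⟩ : Fin (m+1)) = Fin.succ ⟨(i : ℕ) + 1, hi⟩ := rfl
      rw [h2, hs, hs] at this
      simpa using this
    · intro h h1
      have := H 0 (by simpa using h)
      have h2 : (⟨((0 : Fin (m+1)) : ℕ) + 1, by simpa using h⟩ : Fin (m+1)) = Fin.succ ⟨0, h⟩ := by
        ext; simp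
      rw [h2, hs, h0, h1] at this
      simp at this
  · rintro ⟨H1, H2⟩ i hi
    have hi' : (i : ℕ) < m := by omega
    have h2 : (⟨(i : ℕ) + 1, hi⟩ : Fin (m+1)) = Fin.succ ⟨i, hi'⟩ := rfl
    rw [h2, hs]
    induction i using Fin.cases with
    | zero =>
      rw [h0]
      have h3 := H2 hi'
      have h4 : 0 < (e ⟨0, hi'⟩ : ℕ) := by
        rw [Nat.pos_iff_ne_zero]
        intro h; apply h3; ext; exact h
      simp only [Fin.val_succ, Fin.val_zero]
      rw [lt_abs]
      left
      push_cast
      omega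
    | succ i =>
      rw [hs]
      have := H1 i (by simpa using hi')
      simpa using this

lemma decomp_fst {m : ℕ} (p : Fin (m+1) × Equiv.Perm (Fin m)) :
    Equiv.Perm.decomposeFin.symm p 0 = p.1 := by
  rcases p with ⟨a, b⟩; simp

lemma card_fix (m : ℕ) :
    Nat.card {σ : Equiv.Perm (Fin (m+1)) // IsKing σ ∧ σ 0 = 0} = Bcount m := by
  unfold Bcount
  symm
  refine Nat.card_congr (Equiv.ofBijective
    (fun e => ⟨Equiv.Perm.decomposeFin.symm (0, e.1), (king_ext e.1).2 e.2, by simp⟩) ⟨?_, ?_⟩)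
  · intro a b hab
    simpa [Subtype.ext_iff] using hab
  · rintro ⟨σ, h1, h2⟩
    obtain ⟨⟨a, b⟩, rfl⟩ := Equiv.Perm.decomposeFin.symm.surjective σ
    rw [decomp_fst] at h2
    dsimp only at h2
    subst h2
    exact ⟨⟨b, (king_ext b).1 h1⟩, rfl⟩

open Classical in
theorem statement_7 (n : ℕ) (hn : 1 ≤ n) :
    (∑ σ : Equiv.Perm (Fin n),
        if IsKing σ then (Polynomial.X : Polynomial ℚ) ^ occTwelve σ else 0)
      = (Bcount n : Polynomial ℚ)
        + (Polynomial.X : Polynomial ℚ) ^ (n - 1) * (Bcount (n - 1) : Polynomial ℚ) ∧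
    (∀ σ : Equiv.Perm (Fin n), IsKing σ → 2 ≤ n →
      (σ ⟨0, by omega⟩ = ⟨0, by omega⟩ → occTwelve σ = n - 1) ∧
      (σ ⟨0, by omega⟩ ≠ ⟨0, by omega⟩ → occTwelve σ = 0)) ∧
    (2 ≤ n →
      Nat.card {σ : Equiv.Perm (Fin n) //
          IsKing σ ∧ σ ⟨0, by omega⟩ = ⟨0, by omega⟩} = Bcount (n - 1)) := by
  obtain ⟨m, rfl⟩ : ∃ m, n = m + 1 := ⟨n - 1, by omega⟩
  refine ⟨?_, ?_, ?_⟩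
  · have hB : Bcount (m+1) =
        Nat.card {σ : Equiv.Perm (Fin (m+1)) // IsKing σ ∧ σ 0 ≠ 0} := by
      unfold Bcount
      refine Nat.card_congr (Equiv.subtypeEquivRight fun σ => ?_)
      exact ⟨fun h => ⟨h.1, h.2 (Nat.succ_pos m)⟩, fun h => ⟨h.1, fun _ => h.2⟩⟩
    have key : ∀ σ : Equiv.Perm (Fin (m+1)),
        (if IsKing σ then (Polynomial.X : Polynomial ℚ) ^ occTwelve σ else 0) =
        (if IsKing σ ∧ σ 0 ≠ 0 then 1 else 0) +
        Polynomial.X ^ m * (if IsKing σ ∧ σ 0 = 0 then 1 else 0) := by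
      intro σ
      by_cases h : σ 0 = 0
      · by_cases hk : IsKing σ <;> simp [h, hk, occ_of_fix]
      · by_cases hk : IsKing σ <;> simp [h, hk, occ_of_nfix]
    rw [Finset.sum_congr rfl fun σ _ => key σ, Finset.sum_add_distrib, ← Finset.mul_sum,
      Finset.sum_boole, Finset.sum_boole, hB, Nat.add_sub_cancel, ← card_fix m,
      Nat.card_eq_fintype_card, Nat.card_eq_fintype_card, Fintype.card_subtype,
      Fintype.card_subtype]
  · intro σ _ _
    exact ⟨fun h => occ_of_fix σ h, fun h => occ_of_nfix σ h⟩
  · intro _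
    exact card_fix m
end

section
/- Let p_n be the number of king permutations of length n avoiding the mesh pattern Nr. 16, where an occurrence of this pattern is a pair of indices i < j with σ_i < σ_j such that every element before position i has value less than σ_i and every element after position i (other than σ_i itself) has value greater than σ_i (equivalently, i is a strong fixed point of σ with i < n and j is any index with i < j ≤ n). Let P(t) = Σ_{n≥0} p_n t^n. Then (1 + t + t·A(t))·P(t) = (1+t)^2·A(t) as formal power series over ℚ. -/
/-- An occurrence of the mesh pattern Nr. 16 in `σ`: positions `i < j` with
`σ i < σ j`, every element before position `i` smaller than `σ i`, and every
element after position `i` greater than `σ i`. -/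
def OccP {n : ℕ} (σ : Equiv.Perm (Fin n)) (i j : Fin n) : Prop :=
  i < j ∧ σ i < σ j ∧
    (∀ k : Fin n, k < i → σ k < σ i) ∧
    (∀ k : Fin n, i < k → σ i < σ k)

/-- The number of occurrences of the mesh pattern Nr. 16 in `σ`. -/
noncomputable def occP {n : ℕ} (σ : Equiv.Perm (Fin n)) : ℕ :=
  Nat.card {p : Fin n × Fin n // OccP σ p.1 p.2}

/-- `P(t) = Σ_{n≥0} p_n t^n`, where `p_n` counts king permutations of length `n`
avoiding the mesh pattern Nr. 16. -/
noncomputable def Pav : PowerSeries ℚ :=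
  PowerSeries.mk fun n =>
    (Nat.card {σ : Equiv.Perm (Fin n) // IsKing σ ∧ occP σ = 0} : ℚ)

namespace KP

/-- extension of a permutation to a function on ℕ -/
def ev {n : ℕ} (σ : Equiv.Perm (Fin n)) (i : ℕ) : ℕ :=
  if h : i < n then (σ ⟨i, h⟩ : ℕ) else i

theorem ev_lt {n : ℕ} (σ : Equiv.Perm (Fin n)) {i : ℕ} (h : i < n) : ev σ i < n := by
  simp [ev, h]

theorem ev_inj {n : ℕ} (σ : Equiv.Perm (Fin n)) {i j : ℕ} (hi : i < n) (hj : j < n)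
    (h : ev σ i = ev σ j) : i = j := by
  simp only [ev, hi, hj, dif_pos] at h
  have := σ.injective (Fin.ext h)
  simpa using this

theorem ev_fin {n : ℕ} (σ : Equiv.Perm (Fin n)) (i : Fin n) : ev σ i = (σ i : ℕ) := by
  simp [ev]

theorem ev_ext {n : ℕ} {σ τ : Equiv.Perm (Fin n)} (h : ∀ i < n, ev σ i = ev τ i) : σ = τ := by
  ext i
  rw [← ev_fin, ← ev_fin]
  exact h i i.2

/-- permutation from a function on ℕ -/
noncomputable def mkP {n : ℕ} (f : ℕ → ℕ) (hf : ∀ i < n, f i < n)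
    (hi : ∀ i < n, ∀ j < n, f i = f j → i = j) : Equiv.Perm (Fin n) :=
  Equiv.ofBijective (fun i : Fin n => (⟨f i, hf i i.2⟩ : Fin n))
    (Finite.injective_iff_bijective.mp (by
      intro i j h
      have h' : f i = f j := congrArg Fin.val h
      exact Fin.ext (hi i i.2 j j.2 h')))

theorem ev_mkP {n : ℕ} (f : ℕ → ℕ) (hf : ∀ i < n, f i < n)
    (hi : ∀ i < n, ∀ j < n, f i = f j → i = j) {i : ℕ} (h : i < n) :
    ev (mkP f hf hi) i = f i := by
  simp [ev, mkP, h]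

/-- strong fixed point -/
def SFP {n : ℕ} (σ : Equiv.Perm (Fin n)) (a : ℕ) : Prop :=
  a < n ∧ (∀ k < a, ev σ k < ev σ a) ∧ (∀ k, a < k → k < n → ev σ a < ev σ k)

theorem king_iff {n : ℕ} (σ : Equiv.Perm (Fin n)) :
    IsKing σ ↔ ∀ i, i + 1 < n → (ev σ i + 1 < ev σ (i+1) ∨ ev σ (i+1) + 1 < ev σ i) := by
  have key : ∀ x y : ℕ, 1 < |(x : ℤ) - (y : ℤ)| ↔ (y + 1 < x ∨ x + 1 < y) := by
    intro x y
    rw [lt_abs]; omega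
  constructor
  · intro h i hi
    have := h ⟨i, by omega⟩ hi
    rw [key] at this
    have h1 : i < n := by omega
    simpa [ev, hi, h1] using this
  · intro h i hi
    have := h i hi
    rw [key]
    simpa [ev, hi] using this

theorem SFP.fix {n : ℕ} {σ : Equiv.Perm (Fin n)} {a : ℕ} (h : SFP σ a) : ev σ a = a := by
  obtain ⟨ha, h1, h2⟩ := h
  have hl := ev_lt σ ha
  have c1 : (Finset.range a).card ≤ (Finset.range (ev σ a)).card := by
    apply Finset.card_le_card_of_injOn (ev σ)
    · intro k hk
      simp at hk ⊢
      exact h1 k hk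
    · intro i hi j hj hij
      simp at hi hj
      exact ev_inj σ (by omega) (by omega) hij
  have c2 : (Finset.Ioo a n).card ≤ (Finset.Ioo (ev σ a) n).card := by
    apply Finset.card_le_card_of_injOn (ev σ)
    · intro k hk
      simp at hk ⊢
      exact ⟨h2 k hk.1 hk.2, ev_lt σ hk.2⟩
    · intro i hi j hj hij
      simp at hi hj
      exact ev_inj σ (by omega) (by omega) hij
  simp at c1 c2
  omega

theorem SFP_zero {n : ℕ} {σ : Equiv.Perm (Fin n)} (hn : 0 < n) (h : ev σ 0 = 0) : SFP σ 0 := by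
  refine ⟨hn, by omega, ?_⟩
  intro k hk hkn
  have : ev σ k ≠ ev σ 0 := fun e => by have := ev_inj σ hkn hn e; omega
  omega

theorem SFP_last {n : ℕ} {σ : Equiv.Perm (Fin (n+1))} (h : ev σ n = n) : SFP σ n := by
  refine ⟨by omega, ?_, by omega⟩
  intro k hk
  have : ev σ k ≠ ev σ n := fun e => by have := ev_inj σ (by omega) (by omega) e; omega
  have := ev_lt σ (i := k) (by omega)
  omega

/-- king with no SFP -/
def PF {n : ℕ} (σ : Equiv.Perm (Fin n)) : Prop := IsKing σ ∧ ∀ i, ¬ SFP σ i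
/-- king not starting with min -/
def PG {n : ℕ} (σ : Equiv.Perm (Fin n)) : Prop := IsKing σ ∧ ¬ SFP σ 0
/-- king with first SFP at a -/
def PC {n : ℕ} (a : ℕ) (σ : Equiv.Perm (Fin n)) : Prop :=
  IsKing σ ∧ SFP σ a ∧ ∀ i < a, ¬ SFP σ i

/-- glued function -/
def glue {a b : ℕ} (α : Equiv.Perm (Fin a)) (β : Equiv.Perm (Fin b)) (i : ℕ) : ℕ :=
  if i < a then ev α i else if i = a then a else a + 1 + ev β (i - (a+1))

theorem glue1 {a b : ℕ} (α : Equiv.Perm (Fin a)) (β : Equiv.Perm (Fin b)) {i : ℕ} (h : i < a) :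
    glue α β i = ev α i := by simp [glue, h]
theorem glue2 {a b : ℕ} (α : Equiv.Perm (Fin a)) (β : Equiv.Perm (Fin b)) :
    glue α β a = a := by simp [glue]
theorem glue3 {a b : ℕ} (α : Equiv.Perm (Fin a)) (β : Equiv.Perm (Fin b)) (i : ℕ) :
    glue α β (a + 1 + i) = a + 1 + ev β i := by
  have h1 : ¬ (a + 1 + i < a) := by omega
  have h2 : ¬ (a + 1 + i = a) := by omega
  simp only [glue, h1, h2, if_false]
  congr 2; omega

theorem tri {a b i : ℕ} (h : i < a + 1 + b) : i < a ∨ i = a ∨ ∃ j < b, i = a + 1 + j := by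
  rcases lt_trichotomy i a with h1 | h1 | h1
  · exact Or.inl h1
  · exact Or.inr (Or.inl h1)
  · exact Or.inr (Or.inr ⟨i - (a+1), by omega, by omega⟩)

/-- glued permutation -/
noncomputable def glueP {a b : ℕ} (α : Equiv.Perm (Fin a)) (β : Equiv.Perm (Fin b)) :
    Equiv.Perm (Fin (a + 1 + b)) :=
  mkP (glue α β)
    (by
      intro i hi
      rcases tri hi with h | rfl | ⟨j, hj, rfl⟩
      · rw [glue1 _ _ h]; have := ev_lt α h; omega
      · rw [glue2]; omega
      · rw [glue3]; have := ev_lt β hj; omega)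
    (by
      intro i hi k hk e
      rcases tri hi with h | rfl | ⟨j, hj, rfl⟩ <;> rcases tri hk with h' | h' | ⟨j', hj', rfl⟩
      · rw [glue1 _ _ h, glue1 _ _ h'] at e; exact ev_inj α h h' e
      · subst h'; rw [glue1 _ _ h, glue2] at e; have := ev_lt α h; omega
      · rw [glue1 _ _ h, glue3] at e; have := ev_lt α h; omega
      · rw [glue1 _ _ h', glue2] at e; have := ev_lt α h'; omega
      · exact h'.symm
      · rw [glue2, glue3] at e; omega
      · rw [glue1 _ _ h', glue3] at e; have := ev_lt α h'; omega
      · subst h'; rw [glue2, glue3] at e; omega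
      · rw [glue3, glue3] at e; have := ev_inj β hj hj' (by omega); omega)

section
variable {a b : ℕ} (α : Equiv.Perm (Fin a)) (β : Equiv.Perm (Fin b))

theorem g1 {i : ℕ} (h : i < a) : ev (glueP α β) i = ev α i := by
  rw [glueP, ev_mkP _ _ _ (by omega), glue1 _ _ h]
theorem g2 : ev (glueP α β) a = a := by
  rw [glueP, ev_mkP _ _ _ (by omega), glue2]
theorem g3 {i : ℕ} (h : i < b) : ev (glueP α β) (a + 1 + i) = a + 1 + ev β i := by
  rw [glueP, ev_mkP _ _ _ (by omega), glue3]

theorem glue_SFP : SFP (glueP α β) a := by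
  refine ⟨by omega, ?_, ?_⟩
  · intro k hk
    rw [g1 _ _ hk, g2]; exact ev_lt α hk
  · intro k hk hk'
    rcases tri hk' with h | h | ⟨j, hj, rfl⟩
    · omega
    · omega
    · rw [g2, g3 _ _ hj]; omega

theorem glue_SFP_lt {i : ℕ} (h : i < a) : SFP (glueP α β) i ↔ SFP α i := by
  constructor
  · rintro ⟨_, h1, h2⟩
    refine ⟨h, ?_, ?_⟩
    · intro k hk
      have := h1 k hk
      rwa [g1 _ _ h, g1 _ _ (by omega)] at this
    · intro k hk hk'
      have := h2 k hk (by omega)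
      rwa [g1 _ _ h, g1 _ _ (by omega)] at this
  · rintro ⟨_, h1, h2⟩
    have hl := ev_lt α h
    refine ⟨by omega, ?_, ?_⟩
    · intro k hk
      rw [g1 _ _ h, g1 _ _ (by omega)]
      exact h1 k hk
    · intro k hk hk'
      rw [g1 _ _ h]
      rcases tri hk' with h' | rfl | ⟨j, hj, rfl⟩
      · rw [g1 _ _ h']; exact h2 k hk h'
      · rw [g2]; exact hl
      · rw [g3 _ _ hj]; omega

theorem glue_PC : PC a (glueP α β) ↔ PF α ∧ PG β := by
  constructor
  · rintro ⟨hk, -, h0⟩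
    rw [king_iff] at hk
    refine ⟨⟨?_, ?_⟩, ?_, ?_⟩
    · rw [king_iff]
      intro i hi
      have := hk i (by omega)
      rwa [g1 _ _ hi, g1 _ _ (by omega)] at this
    · intro i hi
      exact h0 i hi.1 ((glue_SFP_lt α β hi.1).2 hi)
    · rw [king_iff]
      intro i hi
      have := hk (a + 1 + i) (by omega)
      rw [add_assoc (a+1) i 1, g3 _ _ hi, g3 _ _ (by omega)] at this
      omega
    · intro h
      have hb := h.1
      have := hk a (by omega)
      have e := g3 α β hb
      rw [h.fix] at e
      simp only [add_zero] at e
      rw [e, g2] at this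
      omega
  · rintro ⟨⟨ka, ha⟩, kb, hb⟩
    refine ⟨?_, glue_SFP α β, ?_⟩
    · rw [king_iff] at *
      intro i hi
      rcases tri (a := a) (b := b) (i := i) (by omega) with h | rfl | ⟨j, hj, rfl⟩
      · rcases Nat.lt_or_ge (i+1) a with h' | h'
        · rw [g1 _ _ h, g1 _ _ h']; exact ka i h'
        · obtain rfl : a = i + 1 := by omega
          rw [g1 _ _ h, g2]
          have h1 : ev α i ≠ i := fun e => ha i (SFP_last e)
          have := ev_lt α h
          omega
      · have hb0 : 0 < b := by omega
        have h1 : ev β 0 ≠ 0 := fun e => hb (SFP_zero hb0 e)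
        have e := g3 α β hb0
        simp only [add_zero] at e
        rw [e, g2]
        omega
      · rw [add_assoc (a+1) j 1, g3 _ _ hj, g3 _ _ (by omega)]
        have := kb j (by omega)
        omega
    · intro i hi h
      exact ha i ((glue_SFP_lt α β hi).1 h)

end

theorem glue_surj {a b : ℕ} (σ : Equiv.Perm (Fin (a+1+b))) (h : SFP σ a) :
    ∃ α : Equiv.Perm (Fin a), ∃ β : Equiv.Perm (Fin b), glueP α β = σ := by
  have hf := h.fix
  obtain ⟨_, h1, h2⟩ := h
  rw [hf] at h1 h2
  refine ⟨mkP (ev σ) h1 (fun i hi j hj e => ev_inj σ (by omega) (by omega) e),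
    mkP (fun i => ev σ (a+1+i) - (a+1)) ?_ ?_, ?_⟩
  · intro i hi
    have := h2 (a+1+i) (by omega) (by omega)
    have := ev_lt σ (i := a+1+i) (by omega)
    omega
  · intro i hi j hj e
    have := h2 (a+1+i) (by omega) (by omega)
    have := h2 (a+1+j) (by omega) (by omega)
    have := ev_inj σ (i := a+1+i) (j := a+1+j) (by omega) (by omega) (by omega)
    omega
  · apply ev_ext
    intro i hi
    rcases tri hi with h | rfl | ⟨j, hj, rfl⟩
    · rw [g1 _ _ h, ev_mkP _ _ _ h]
    · rw [g2, hf]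
    · rw [g3 _ _ hj, ev_mkP _ _ _ hj]
      have := h2 (a+1+j) (by omega) (by omega)
      omega

theorem glue_inj {a b : ℕ} {α α' : Equiv.Perm (Fin a)} {β β' : Equiv.Perm (Fin b)}
    (h : glueP α β = glueP α' β') : α = α' ∧ β = β' := by
  constructor
  · apply ev_ext
    intro i hi
    rw [← g1 α β hi, ← g1 α' β' hi, h]
  · apply ev_ext
    intro i hi
    have h1 := g3 α β hi
    have h2 := g3 α' β' hi
    rw [h] at h1
    omega

/-- counts -/
noncomputable def cF (n : ℕ) : ℕ := Nat.card {σ : Equiv.Perm (Fin n) // PF σ}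
/-- counts -/
noncomputable def cG (n : ℕ) : ℕ := Nat.card {σ : Equiv.Perm (Fin n) // PG σ}
/-- counts -/
noncomputable def cC (n a : ℕ) : ℕ := Nat.card {σ : Equiv.Perm (Fin n) // PC a σ}

theorem cC_eq (n a b : ℕ) (h : n = a + 1 + b) : cC n a = cF a * cG b := by
  subst h
  unfold cC cF cG
  rw [← Nat.card_prod]
  symm
  apply Nat.card_congr
  refine Equiv.ofBijective
    (fun p => ⟨glueP p.1.1 p.2.1, (glue_PC _ _).2 ⟨p.1.2, p.2.2⟩⟩) ⟨?_, ?_⟩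
  · rintro ⟨⟨x, hx⟩, ⟨y, hy⟩⟩ ⟨⟨x', hx'⟩, ⟨y', hy'⟩⟩ h
    have := glue_inj (congrArg Subtype.val h)
    simp only at this
    obtain ⟨rfl, rfl⟩ := this
    rfl
  · rintro ⟨σ, hσ⟩
    obtain ⟨α, β, rfl⟩ := glue_surj σ hσ.2.1
    have := (glue_PC α β).1 hσ
    exact ⟨⟨⟨α, this.1⟩, ⟨β, this.2⟩⟩, rfl⟩

theorem card_split {X : Type} [Finite X] (p q r : X → Prop)
    (h : ∀ x, p x ↔ q x ∨ r x) (hd : ∀ x, q x → ¬ r x) :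
    Nat.card {x // p x} = Nat.card {x // q x} + Nat.card {x // r x} := by
  classical
  have := Fintype.ofFinite X
  simp only [Nat.card_eq_fintype_card, Fintype.card_subtype]
  rw [← Finset.card_union_of_disjoint]
  · congr 1
    ext x
    simp [h]
  · rw [Finset.disjoint_filter]
    intro x _
    exact hd x

theorem A_G (n : ℕ) : kingCount n = cG n + cC n 0 := by
  apply card_split
  · intro σ
    simp only [PG, PC]
    have : ∀ i < 0, ¬ SFP σ i := by omega
    tauto
  · intro σ h h'
    exact h.2 h'.2.1

theorem A_F (n : ℕ) : kingCount n = cF n + ∑ a ∈ Finset.range n, cC n a := by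
  classical
  unfold kingCount cF cC
  simp only [Nat.card_eq_fintype_card, Fintype.card_subtype]
  let g : Equiv.Perm (Fin n) → ℕ := fun σ => if h : ∃ i, SFP σ i then Nat.find h else n
  have hg : ∀ σ, ∀ a < n, g σ = a ↔ (SFP σ a ∧ ∀ i < a, ¬ SFP σ i) := by
    intro σ a ha
    by_cases h : ∃ i, SFP σ i
    · simp only [g, h, dif_pos]
      rw [Nat.find_eq_iff]
    · simp only [g, h, dif_neg, not_false_iff]
      constructor
      · omega
      · intro h'; exact absurd ⟨a, h'.1⟩ h
  have hn : ∀ σ, g σ = n ↔ ∀ i, ¬ SFP σ i := by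
    intro σ
    by_cases h : ∃ i, SFP σ i
    · simp only [g, h, dif_pos]
      constructor
      · intro e
        have := (Nat.find_spec h).1
        omega
      · intro h'
        obtain ⟨i, hi⟩ := h
        exact absurd hi (h' i)
    · simp only [g, h, dif_neg, not_false_iff, true_iff]
      exact fun i hi => h ⟨i, hi⟩
  rw [Finset.card_eq_sum_card_fiberwise (f := g) (t := Finset.range (n+1))]
  · rw [Finset.sum_range_succ, add_comm]
    congr 1
    · congr 1
      ext σ
      simp only [Finset.mem_filter, Finset.mem_univ, true_and, hn]; rfl
    · apply Finset.sum_congr rfl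
      intro a ha
      congr 1
      ext σ
      simp only [Finset.mem_filter, Finset.mem_univ, true_and, hg σ a (Finset.mem_range.1 ha)]; rfl
  · intro σ _
    simp only [Finset.coe_range, Set.mem_Iio]
    by_cases h : ∃ i, SFP σ i
    · simp only [g, h, dif_pos]
      have := (Nat.find_spec h).1
      omega
    · simp only [g, h, dif_neg, not_false_iff]
      omega

theorem occ_iff {n : ℕ} (σ : Equiv.Perm (Fin n)) :
    occP σ = 0 ↔ ∀ i, i + 1 < n → ¬ SFP σ i := by
  unfold occP
  rw [Finite.card_eq_zero_iff, isEmpty_subtype]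
  constructor
  · intro h i hi ⟨h0, h1, h2⟩
    apply h (⟨i, h0⟩, ⟨i+1, hi⟩)
    refine ⟨?_, ?_, ?_, ?_⟩
    · simp [Fin.lt_def]
    · have := h2 (i+1) (by omega) hi
      simpa [ev, h0, hi] using this
    · intro k hk
      have := h1 k hk
      simpa [ev, h0] using this
    · intro k hk
      have := h2 k hk k.2
      simpa [ev, h0] using this
  · rintro h ⟨i, j⟩ ⟨hij, h0, h1, h2⟩
    simp only at hij h0 h1 h2
    have hij' : (i : ℕ) < j := hij
    have hj := j.2
    apply h i (by omega)
    refine ⟨i.2, ?_, ?_⟩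
    · intro k hk
      have := h1 ⟨k, by omega⟩ hk
      rw [Fin.lt_def, ← ev_fin, ← ev_fin] at this
      exact this
    · intro k hk hk'
      have := h2 ⟨k, by omega⟩ hk
      rw [Fin.lt_def, ← ev_fin, ← ev_fin] at this
      exact this

theorem P_F (n : ℕ) : Nat.card {σ : Equiv.Perm (Fin (n+1)) // IsKing σ ∧ occP σ = 0}
    = cF (n+1) + cC (n+1) n := by
  apply card_split
  · intro σ
    rw [occ_iff]
    simp only [PF, PC]
    constructor
    · rintro ⟨hk, h⟩
      by_cases hn : SFP σ n
      · exact Or.inr ⟨hk, hn, fun i hi => h i (by omega)⟩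
      · refine Or.inl ⟨hk, fun i hi => ?_⟩
        have := hi.1
        rcases Nat.lt_or_ge i n with h' | h'
        · exact h i (by omega) hi
        · obtain rfl : i = n := by omega
          exact hn hi
    · rintro (⟨hk, h⟩ | ⟨hk, _, h⟩)
      · exact ⟨hk, fun i _ => h i⟩
      · exact ⟨hk, fun i hi => h i (by omega)⟩
  · intro σ h h'
    exact h.2 n h'.2.1

theorem P_F0 : Nat.card {σ : Equiv.Perm (Fin 0) // IsKing σ ∧ occP σ = 0} = cF 0 := by
  unfold cF
  apply Nat.card_congr
  apply Equiv.subtypeEquivRight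
  intro σ
  rw [occ_iff, PF]
  constructor
  · exact fun h => ⟨h.1, fun i hi => absurd hi.1 (by omega)⟩
  · exact fun h => ⟨h.1, fun i hi => absurd hi (by omega)⟩

theorem cF0 : cF 0 = 1 := by
  unfold cF
  rw [Nat.card_eq_one_iff_unique]
  refine ⟨inferInstance, ⟨⟨1, ?_, ?_⟩⟩⟩
  · intro i; exact i.elim0
  · intro i hi; exact absurd hi.1 (by omega)

theorem cG0 : cG 0 = 1 := by
  unfold cG
  rw [Nat.card_eq_one_iff_unique]
  refine ⟨inferInstance, ⟨⟨1, ?_, ?_⟩⟩⟩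
  · intro i; exact i.elim0
  · intro hi; exact absurd hi.1 (by omega)

theorem cC00 : cC 0 0 = 0 := by
  unfold cC
  rw [Finite.card_eq_zero_iff, isEmpty_subtype]
  intro σ h
  exact absurd h.2.1.1 (by omega)

open PowerSeries in
theorem fin1 : kingA = (1 + X) * (mk fun n => (cG n : ℚ)) := by
  ext n
  rw [add_mul, one_mul, map_add, kingA, coeff_mk, coeff_mk, A_G]
  cases n with
  | zero => simp [cC00]
  | succ n => rw [coeff_succ_X_mul, coeff_mk, cC_eq (n+1) 0 n (by omega), cF0]; simp

open PowerSeries in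
theorem fin2 : Pav = (1 + X) * (mk fun n => (cF n : ℚ)) := by
  ext n
  rw [add_mul, one_mul, map_add, Pav, coeff_mk, coeff_mk]
  cases n with
  | zero => rw [P_F0]; simp
  | succ n => rw [P_F, coeff_succ_X_mul, coeff_mk, cC_eq (n+1) n 0 (by omega), cG0]; simp

open PowerSeries in
theorem fin3 : kingA = (mk fun n => (cF n : ℚ)) +
    X * ((mk fun n => (cF n : ℚ)) * (mk fun n => (cG n : ℚ))) := by
  ext n
  rw [map_add, kingA, coeff_mk, coeff_mk, A_F]
  cases n with
  | zero => simp
  | succ n =>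
    rw [coeff_succ_X_mul, coeff_mul, Finset.Nat.sum_antidiagonal_eq_sum_range_succ_mk]
    push_cast
    congr 1
    apply Finset.sum_congr rfl
    intro a ha
    have := Finset.mem_range.1 ha
    rw [cC_eq (n+1) a (n-a) (by omega)]
    simp

end KP

theorem statement_12 :
    (1 + PowerSeries.X + PowerSeries.X * kingA) * Pav
      = (1 + PowerSeries.X) ^ 2 * kingA := by
  have h1 := KP.fin1
  have h2 := KP.fin2
  have h3 := KP.fin3
  rw [h2]
  generalize (PowerSeries.mk fun n => (KP.cF n : ℚ)) = F at *
  generalize (PowerSeries.mk fun n => (KP.cG n : ℚ)) = G at *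
  have e : (1 + PowerSeries.X + PowerSeries.X * kingA) * ((1 + PowerSeries.X) * F)
      = (1 + PowerSeries.X) ^ 2 * (F + PowerSeries.X * (F * G)) := by
    rw [h1]; ring
  rw [e, ← h3]
end
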